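/- Let S be a set of nonnegative integers, let w : S → {2,3,4,…}, and let (α_j)_{j≥0} be real numbers with 0 < 2α_{j+1} ≤ α_j ≤ 1/4 for all j ≥ 0. Define θ_j = 2^{−w(j)} for j ∈ S and θ_j = (1−α_j)/2 for j ∉ S, and set w^+(k) = ∑_{j∈S, j<k} w(j), χ^+(k) = #(S ∩ [0,k−1]) and k* = k + w^+(k) − χ^+(k). Then: (a) 2^{−k*−1} ≤ Θ_k ≤ 2^{−k*} for every k ≥ 0; and (b) for all integers 0 ≤ r ≤ j, (1 − 2α_r) 2^{−(j* − r*)} ≤ Θ_j / Θ_r ≤ 2^{−(j* − r*)}. -/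

import Mathlib

/-- `Θ_k = θ_0 θ_1 ⋯ θ_{k-1}`. -/
noncomputable def Theta (θ : ℕ → ℝ) (k : ℕ) : ℝ := ∏ j ∈ Finset.range k, θ j

/-- `w⁺(k) = ∑_{j∈S, j<k} w(j)`. -/
noncomputable def wplus (S : Set ℕ) (w : ℕ → ℕ) (k : ℕ) : ℕ :=
  ∑ j ∈ Finset.range k, S.indicator w j

/-- `χ⁺(k) = #(S ∩ [0,k-1])`. -/
noncomputable def chiplus (S : Set ℕ) (k : ℕ) : ℕ :=
  ∑ j ∈ Finset.range k, S.indicator (fun _ => 1) j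

/-- `k* = k + w⁺(k) − χ⁺(k)` (as an integer). -/
noncomputable def kstar (S : Set ℕ) (w : ℕ → ℕ) (k : ℕ) : ℤ :=
  (k : ℤ) + (wplus S w k : ℤ) - (chiplus S k : ℤ)

/-! From the factor `θ i`, split off the exact power of two by which `kstar` grows at `i`: what
remains is `1` for `i ∈ S` and `1 - α i` for `i ∉ S`. Hence `Θ_j / Θ_r` is `2 ^ (-(j* - r*))` times
a product of numbers `1 - β i` with `0 ≤ β i ≤ α i`. This product is at most `1`, and by the
Weierstrass inequality it is at least `1 - ∑ α i`, the sum running over `r ≤ i < j`; since `α` at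
least halves at each step, the sum is at most `2 * α r`. Part (a) is the case `r = 0` of part (b),
because `1 - 2 * α 0 ≥ 1 / 2`. -/

open Finset

section OrderedRing

theorem one_sub_sum_le_prod_one_sub {ι R : Type*} [CommRing R] [PartialOrder R] [IsOrderedRing R]
    {s : Finset ι} {f : ι → R} (h0 : ∀ i ∈ s, 0 ≤ f i) (h1 : ∀ i ∈ s, f i ≤ 1) :
    1 - ∑ i ∈ s, f i ≤ ∏ i ∈ s, (1 - f i) := by
  classical
  induction s using Finset.induction_on with
  | empty => simp
  | insert a s ha ih =>
    rw [forall_mem_insert] at h0 h1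
    have prod_le : ∏ i ∈ s, (1 - f i) ≤ 1 :=
      prod_le_one (fun i hi ↦ sub_nonneg.2 (h1.2 i hi)) (fun i hi ↦ sub_le_self 1 (h0.2 i hi))
    rw [sum_insert ha, prod_insert ha]
    calc 1 - (f a + ∑ i ∈ s, f i) = (1 - ∑ i ∈ s, f i) - f a := by ring
      _ ≤ ∏ i ∈ s, (1 - f i) - f a * ∏ i ∈ s, (1 - f i) :=
        sub_le_sub (ih h0.2 h1.2) (mul_le_of_le_one_right h0.1 prod_le)
      _ = (1 - f a) * ∏ i ∈ s, (1 - f i) := by ring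

variable {R : Type*} [CommRing R] [LinearOrder R] [IsStrictOrderedRing R] {a f : ℕ → R} {m n : ℕ}

theorem sum_Ico_le_two_mul_sub (ha : ∀ i, 2 * a (i + 1) ≤ a i) (hmn : m ≤ n) :
    ∑ i ∈ Ico m n, a i ≤ 2 * (a m - a n) :=
  calc ∑ i ∈ Ico m n, a i ≤ ∑ i ∈ Ico m n, (-2 * a (i + 1) - -2 * a i) :=
        sum_le_sum fun i _ ↦ by linarith [ha i]
    _ = 2 * (a m - a n) := by rw [sum_Ico_sub (fun i ↦ -2 * a i) hmn]; ring

theorem one_sub_two_mul_le_prod_Ico_one_sub (ha : ∀ i, 2 * a (i + 1) ≤ a i) (hf0 : ∀ i, 0 ≤ f i)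
    (hf1 : ∀ i, f i ≤ 1) (hfa : ∀ i, f i ≤ a i) (hmn : m ≤ n) :
    1 - 2 * a m ≤ ∏ i ∈ Ico m n, (1 - f i) :=
  calc 1 - 2 * a m ≤ 1 - 2 * (a m - a n) := by linarith [(hf0 n).trans (hfa n)]
    _ ≤ 1 - ∑ i ∈ Ico m n, a i := sub_le_sub_left (sum_Ico_le_two_mul_sub ha hmn) 1
    _ ≤ 1 - ∑ i ∈ Ico m n, f i := sub_le_sub_left (sum_le_sum fun i _ ↦ hfa i) 1
    _ ≤ ∏ i ∈ Ico m n, (1 - f i) :=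
      one_sub_sum_le_prod_one_sub (fun i _ ↦ hf0 i) (fun i _ ↦ hf1 i)

end OrderedRing

section Dissection

@[simp]
theorem Theta_zero (θ : ℕ → ℝ) : Theta θ 0 = 1 := prod_range_zero θ

theorem Theta_succ (θ : ℕ → ℝ) (k : ℕ) : Theta θ (k + 1) = Theta θ k * θ k := prod_range_succ θ k

variable {S : Set ℕ} {w : ℕ → ℕ} {α θ : ℕ → ℝ} {k r j : ℕ}

@[simp]
theorem kstar_apply_zero : kstar S w 0 = 0 := by simp [kstar, wplus, chiplus]

theorem kstar_apply_succ_of_mem (hk : k ∈ S) : kstar S w (k + 1) = kstar S w k + w k := by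
  simp only [kstar, wplus, chiplus, sum_range_succ, Set.indicator_of_mem hk]
  push_cast
  ring

theorem kstar_apply_succ_of_notMem (hk : k ∉ S) : kstar S w (k + 1) = kstar S w k + 1 := by
  simp only [kstar, wplus, chiplus, sum_range_succ, Set.indicator_of_notMem hk]
  push_cast
  ring

theorem Theta_eq_two_zpow_mul_prod (hθS : ∀ i ∈ S, θ i = (2 : ℝ) ^ (-(w i : ℤ)))
    (hθS' : ∀ i ∉ S, θ i = (1 - α i) / 2) (k : ℕ) :
    Theta θ k = (2 : ℝ) ^ (-kstar S w k) * ∏ i ∈ range k, (1 - Sᶜ.indicator α i) := by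
  induction k with
  | zero => simp
  | succ k ih =>
    rw [Theta_succ, prod_range_succ, ih]
    by_cases hk : k ∈ S
    · rw [hθS k hk, kstar_apply_succ_of_mem hk,
        Set.indicator_of_notMem (Set.notMem_compl_iff.2 hk), neg_add, zpow_add₀ two_ne_zero]
      ring
    · rw [hθS' k hk, kstar_apply_succ_of_notMem hk,
        Set.indicator_of_mem (Set.mem_compl hk), neg_add, zpow_add₀ two_ne_zero, zpow_neg_one]
      ring

theorem Theta_div_Theta (hθS : ∀ i ∈ S, θ i = (2 : ℝ) ^ (-(w i : ℤ)))
    (hθS' : ∀ i ∉ S, θ i = (1 - α i) / 2) (hα_ne : ∀ i ∉ S, α i ≠ 1) (hrj : r ≤ j) :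
    Theta θ j / Theta θ r =
      (2 : ℝ) ^ (-(kstar S w j - kstar S w r)) * ∏ i ∈ Ico r j, (1 - Sᶜ.indicator α i) := by
  have prod_ne_zero : ∏ i ∈ range r, (1 - Sᶜ.indicator α i) ≠ 0 :=
    prod_ne_zero_iff.2 fun i _ ↦ by
      by_cases hi : i ∈ S
      · simp [hi]
      · simpa [hi, sub_eq_zero] using (hα_ne i hi).symm
  rw [Theta_eq_two_zpow_mul_prod hθS hθS' j, Theta_eq_two_zpow_mul_prod hθS hθS' r,
    mul_div_mul_comm, ← zpow_sub₀ two_ne_zero, ← prod_range_mul_prod_Ico _ hrj,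
    mul_div_cancel_left₀ _ prod_ne_zero, neg_sub_neg, neg_sub]

theorem Theta_div_Theta_le (hα0 : ∀ i ∉ S, 0 ≤ α i) (hα_lt : ∀ i ∉ S, α i < 1)
    (hθS : ∀ i ∈ S, θ i = (2 : ℝ) ^ (-(w i : ℤ))) (hθS' : ∀ i ∉ S, θ i = (1 - α i) / 2)
    (hrj : r ≤ j) :
    Theta θ j / Theta θ r ≤ (2 : ℝ) ^ (-(kstar S w j - kstar S w r)) := by
  have indicator_nonneg (i : ℕ) : 0 ≤ Sᶜ.indicator α i := Set.indicator_nonneg hα0 i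
  have indicator_le_one (i : ℕ) : Sᶜ.indicator α i ≤ 1 :=
    Set.indicator_apply_le' (fun hi ↦ (hα_lt i hi).le) fun _ ↦ zero_le_one
  rw [Theta_div_Theta hθS hθS' (fun i hi ↦ (hα_lt i hi).ne) hrj]
  exact mul_le_of_le_one_right (by positivity) <|
    prod_le_one (fun i _ ↦ sub_nonneg.2 (indicator_le_one i))
      (fun i _ ↦ sub_le_self 1 (indicator_nonneg i))

theorem le_Theta_div_Theta (hα0 : ∀ i, 0 ≤ α i) (hα_lt : ∀ i ∉ S, α i < 1)
    (hα_half : ∀ i, 2 * α (i + 1) ≤ α i) (hθS : ∀ i ∈ S, θ i = (2 : ℝ) ^ (-(w i : ℤ)))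
    (hθS' : ∀ i ∉ S, θ i = (1 - α i) / 2) (hrj : r ≤ j) :
    (1 - 2 * α r) * (2 : ℝ) ^ (-(kstar S w j - kstar S w r)) ≤ Theta θ j / Theta θ r := by
  have indicator_nonneg (i : ℕ) : 0 ≤ Sᶜ.indicator α i := Set.indicator_nonneg (fun i _ ↦ hα0 i) i
  have indicator_le_one (i : ℕ) : Sᶜ.indicator α i ≤ 1 :=
    Set.indicator_apply_le' (fun hi ↦ (hα_lt i hi).le) fun _ ↦ zero_le_one
  have indicator_le (i : ℕ) : Sᶜ.indicator α i ≤ α i := Set.indicator_le_self' (fun i _ ↦ hα0 i) i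
  rw [Theta_div_Theta hθS hθS' (fun i hi ↦ (hα_lt i hi).ne) hrj, mul_comm]
  exact mul_le_mul_of_nonneg_left
    (one_sub_two_mul_le_prod_Ico_one_sub hα_half indicator_nonneg indicator_le_one
      indicator_le hrj) (by positivity)

end Dissection

theorem Theta_bounds_general (S : Set ℕ) (w : ℕ → ℕ)
    (α : ℕ → ℝ) (hα0 : ∀ j, 0 ≤ α j) (hα1 : ∀ j, 2 * α (j + 1) ≤ α j)
    (hα2 : ∀ j, α j ≤ 1 / 4)
    (θ : ℕ → ℝ) (hθS : ∀ j ∈ S, θ j = (2 : ℝ) ^ (-(w j : ℤ)))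
    (hθS' : ∀ j ∉ S, θ j = (1 - α j) / 2) :
    (∀ k : ℕ, (2 : ℝ) ^ (-(kstar S w k) - 1) ≤ Theta θ k ∧
      Theta θ k ≤ (2 : ℝ) ^ (-(kstar S w k))) ∧
    (∀ r j : ℕ, r ≤ j →
      (1 - 2 * α r) * (2 : ℝ) ^ (-(kstar S w j - kstar S w r)) ≤ Theta θ j / Theta θ r ∧
      Theta θ j / Theta θ r ≤ (2 : ℝ) ^ (-(kstar S w j - kstar S w r))) := by
  have α_lt_one (i : ℕ) (_ : i ∉ S) : α i < 1 := (hα2 i).trans_lt (by norm_num)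
  have lower {r j : ℕ} (hrj : r ≤ j) :
      (1 - 2 * α r) * (2 : ℝ) ^ (-(kstar S w j - kstar S w r)) ≤ Theta θ j / Theta θ r :=
    le_Theta_div_Theta hα0 α_lt_one hα1 hθS hθS' hrj
  have upper {r j : ℕ} (hrj : r ≤ j) :
      Theta θ j / Theta θ r ≤ (2 : ℝ) ^ (-(kstar S w j - kstar S w r)) :=
    Theta_div_Theta_le (fun i _ ↦ hα0 i) α_lt_one hθS hθS' hrj
  refine ⟨fun k ↦ ⟨?_, ?_⟩, fun r j hrj ↦ ⟨lower hrj, upper hrj⟩⟩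
  · calc (2 : ℝ) ^ (-kstar S w k - 1) = 1 / 2 * (2 : ℝ) ^ (-kstar S w k) := by
          rw [zpow_sub_one₀ two_ne_zero]; ring
      _ ≤ (1 - 2 * α 0) * (2 : ℝ) ^ (-kstar S w k) := by
        gcongr
        linarith [hα2 0]
      _ ≤ Theta θ k := by
        simpa only [Theta_zero, div_one, kstar_apply_zero, sub_zero] using lower k.zero_le
  · simpa only [Theta_zero, div_one, kstar_apply_zero, sub_zero] using upper k.zero_le

/-- **Asymptotics of products of dissection ratios.** With `θ_j = 2^{-w(j)}` for `j ∈ S` and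
`θ_j = (1-α_j)/2` for `j ∉ S`, where `w ≥ 2` on `S` and `0 < 2α_{j+1} ≤ α_j ≤ 1/4`:
(a) `2^{-k*-1} ≤ Θ_k ≤ 2^{-k*}` for all `k`; and
(b) `(1-2α_r) 2^{-(j*-r*)} ≤ Θ_j/Θ_r ≤ 2^{-(j*-r*)}` for all `0 ≤ r ≤ j`. -/
theorem Theta_bounds (S : Set ℕ) (w : ℕ → ℕ) (hw : ∀ j ∈ S, 2 ≤ w j)
    (α : ℕ → ℝ) (hα0 : ∀ j, 0 < α j) (hα1 : ∀ j, 2 * α (j + 1) ≤ α j)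
    (hα2 : ∀ j, α j ≤ 1 / 4)
    (θ : ℕ → ℝ) (hθS : ∀ j ∈ S, θ j = (2 : ℝ) ^ (-(w j : ℤ)))
    (hθS' : ∀ j ∉ S, θ j = (1 - α j) / 2) :
    (∀ k : ℕ, (2 : ℝ) ^ (-(kstar S w k) - 1) ≤ Theta θ k ∧
      Theta θ k ≤ (2 : ℝ) ^ (-(kstar S w k))) ∧
    (∀ r j : ℕ, r ≤ j →
      (1 - 2 * α r) * (2 : ℝ) ^ (-(kstar S w j - kstar S w r)) ≤ Theta θ j / Theta θ r ∧
      Theta θ j / Theta θ r ≤ (2 : ℝ) ^ (-(kstar S w j - kstar S w r))) :=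
  Theta_bounds_general S w α (fun j ↦ (hα0 j).le) hα1 hα2 θ hθS hθS'
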